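/- Let x : ℝ → ℝ² be a C^∞, λ-periodic curve parametrized by affine arc length with affine curvature k (the affine curvature of a strictly convex closed curve). Define the outer-billiard Mather coefficients β₅ := (λ⁴/240)·∫₀^λ k(s) ds and β₇ := (421·λ⁶/201600)·∫₀^λ k(s)² ds − (λ⁵/600)·(∫₀^λ k(s) ds)². Then 7·λ³·β₇ ≥ 170·β₅², with equality if and only if k is constant on ℝ (equivalently, the curve is an ellipse). -/

import Mathlib

open Filter
open scoped Topology

/-- The standard area form on the plane: `ω(u,v) = u₁v₂ − u₂v₁`. -/
noncomputable def om (u v : ℝ × ℝ) : ℝ := u.1 * v.2 - u.2 * v.1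

/-!
Write `m₁ = ∫ k` and `m₂ = ∫ k²` over one period. The term `m₁²` enters both `β₇` and `β₅²`, and
eliminating it leaves `7 λ³ β₇ - 170 β₅² = (421 / 28800) λ⁸ (λ m₂ - m₁²)`. The last factor is
the Cauchy–Schwarz defect of `k` on a period, so it is nonnegative and vanishes exactly when the
continuous periodic function `k` is constant.
-/

section CauchySchwarz

open MeasureTheory Set

variable {α : Type*} [MeasurableSpace α] {μ : Measure α} {f : α → ℝ}

theorem sq_integral_eq_of_ae_eq_const {c : ℝ} (hf : f =ᵐ[μ] Function.const α c) :
    (∫ x, f x ∂μ) ^ 2 = μ.real univ * ∫ x, f x ^ 2 ∂μ := by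
  have hsq : (fun x => f x ^ 2) =ᵐ[μ] Function.const α (c ^ 2) :=
    hf.fun_comp (· ^ 2)
  rw [integral_congr_ae hf, integral_congr_ae hsq]
  simp only [Function.const_apply, integral_const, smul_eq_mul]
  ring

theorem ae_eq_const_or_sq_integral_lt [IsFiniteMeasure μ] (hf : MemLp f 2 μ) :
    f =ᵐ[μ] Function.const α (⨍ x, f x ∂μ) ∨
      (∫ x, f x ∂μ) ^ 2 < μ.real univ * ∫ x, f x ^ 2 ∂μ := by
  rcases eq_or_ne μ 0 with rfl | hμ
  · exact Or.inl (by rw [ae_zero]; exact eventually_bot)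
  have hmass : 0 < μ.real univ :=
    ENNReal.toReal_pos (Measure.measure_univ_ne_zero.mpr hμ) (measure_ne_top μ univ)
  have jensen := (even_two.strictConvexOn_pow two_ne_zero).ae_eq_const_or_map_average_lt
    (continuous_pow 2).continuousOn isClosed_univ (ae_of_all μ fun x => mem_univ (f x))
    (hf.integrable one_le_two) hf.integrable_sq
  refine jensen.imp_right fun hlt => ?_
  simp only [average_eq, smul_eq_mul] at hlt
  calc (∫ x, f x ∂μ) ^ 2
      = μ.real univ ^ 2 * ((μ.real univ)⁻¹ * ∫ x, f x ∂μ) ^ 2 := by field_simp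
    _ < μ.real univ ^ 2 * ((μ.real univ)⁻¹ * ∫ x, f x ^ 2 ∂μ) := by gcongr
    _ = μ.real univ * ∫ x, f x ^ 2 ∂μ := by field_simp

theorem sq_integral_le_measureReal_mul_integral_sq [IsFiniteMeasure μ] (hf : MemLp f 2 μ) :
    (∫ x, f x ∂μ) ^ 2 ≤ μ.real univ * ∫ x, f x ^ 2 ∂μ :=
  (ae_eq_const_or_sq_integral_lt hf).elim (fun h => (sq_integral_eq_of_ae_eq_const h).le) le_of_lt

theorem sq_integral_eq_measureReal_mul_integral_sq_iff [IsFiniteMeasure μ] (hf : MemLp f 2 μ) :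
    (∫ x, f x ∂μ) ^ 2 = μ.real univ * ∫ x, f x ^ 2 ∂μ ↔ ∃ c, f =ᵐ[μ] Function.const α c :=
  ⟨fun h => ⟨_, (ae_eq_const_or_sq_integral_lt hf).resolve_right h.not_lt⟩,
    fun ⟨_, hc⟩ => sq_integral_eq_of_ae_eq_const hc⟩

end CauchySchwarz

section Interval

open MeasureTheory Set

variable {f : ℝ → ℝ} {a b T : ℝ}

theorem memLp_restrict_of_continuousOn {X E : Type*} [TopologicalSpace X]
    [TopologicalSpace.PseudoMetrizableSpace X] [MeasurableSpace X] [OpensMeasurableSpace X]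
    [NormedAddCommGroup E] {ν : Measure X} [IsFiniteMeasureOnCompacts ν] {g : X → E} {K : Set X}
    (hg : ContinuousOn g K) (hK : IsCompact K) (hmeas : MeasurableSet K) (p : ENNReal) :
    MemLp g p (ν.restrict K) := by
  obtain ⟨C, hC⟩ := hK.exists_bound_of_continuousOn hg
  have : Fact (ν K < ⊤) := ⟨hK.measure_lt_top⟩
  exact .of_bound (hg.aestronglyMeasurable_of_isCompact hK hmeas) C
    (ae_restrict_of_forall_mem hmeas hC)

theorem memLp_restrict_Ioc_of_continuous {E : Type*} [NormedAddCommGroup E] {ν : Measure ℝ}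
    [IsFiniteMeasureOnCompacts ν] {g : ℝ → E} (hg : Continuous g) (p : ENNReal) :
    MemLp g p (ν.restrict (Ioc a b)) :=
  (memLp_restrict_of_continuousOn hg.continuousOn isCompact_Icc measurableSet_Icc p).mono_measure
    (Measure.restrict_mono Ioc_subset_Icc_self le_rfl)

theorem sq_intervalIntegral_le (hab : a ≤ b) (hf : MemLp f 2 (volume.restrict (Ioc a b))) :
    (∫ t in a..b, f t) ^ 2 ≤ (b - a) * ∫ t in a..b, f t ^ 2 := by
  simpa only [intervalIntegral.integral_of_le hab, measureReal_restrict_apply_univ,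
    Real.volume_real_Ioc_of_le hab] using sq_integral_le_measureReal_mul_integral_sq hf

theorem sq_intervalIntegral_eq_iff (hab : a ≤ b) (hf : MemLp f 2 (volume.restrict (Ioc a b)))
    (hcont : ContinuousOn f (Ioc a b)) :
    (∫ t in a..b, f t) ^ 2 = (b - a) * ∫ t in a..b, f t ^ 2 ↔
      ∃ c, EqOn f (Function.const ℝ c) (Ioc a b) := by
  have hae (c : ℝ) : f =ᵐ[volume.restrict (Ioc a b)] Function.const ℝ c ↔
      EqOn f (Function.const ℝ c) (Ioc a b) :=
    ⟨fun h => Measure.eqOn_Ioc_of_ae_eq volume h hcont continuousOn_const,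
      fun h => h.aeEq_restrict measurableSet_Ioc⟩
  simpa only [intervalIntegral.integral_of_le hab, measureReal_restrict_apply_univ,
    Real.volume_real_Ioc_of_le hab, hae] using sq_integral_eq_measureReal_mul_integral_sq_iff hf

theorem eqOn_const_Ioc_iff_of_periodic {G β : Type*} [AddCommGroup G] [LinearOrder G]
    [IsOrderedAddMonoid G] [Archimedean G] {g : G → β} {c : G} (hg : Function.Periodic g c)
    (hc : 0 < c) (a : G) (y : β) :
    EqOn g (Function.const G y) (Ioc a (a + c)) ↔ ∀ s, g s = y := by
  refine ⟨fun h s => ?_, fun h s _ => h s⟩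
  obtain ⟨t, ht, hst⟩ := hg.exists_mem_Ioc hc s a
  exact hst.trans (h ht)

theorem sq_intervalIntegral_eq_iff_of_periodic (hf : Continuous f) (hper : Function.Periodic f T)
    (hT : 0 < T) (a : ℝ) :
    (∫ t in a..a + T, f t) ^ 2 = T * ∫ t in a..a + T, f t ^ 2 ↔ ∃ c, ∀ s, f s = c := by
  simpa only [add_sub_cancel_left, eqOn_const_Ioc_iff_of_periodic hper hT] using
    sq_intervalIntegral_eq_iff (le_add_of_nonneg_right hT.le)
      (memLp_restrict_Ioc_of_continuous hf 2) hf.continuousOn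

end Interval

section AffineCurvature

theorem continuous_om {X : Type*} [TopologicalSpace X] {u v : X → ℝ × ℝ} (hu : Continuous u)
    (hv : Continuous v) : Continuous fun s => om (u s) (v s) :=
  (hu.fst.mul hv.snd).sub (hu.snd.mul hv.fst)

theorem periodic_iteratedDeriv {𝕜 E : Type*} [NontriviallyNormedField 𝕜]
    [NormedAddCommGroup E] [NormedSpace 𝕜 E] {f : 𝕜 → E} {T : 𝕜}
    (hf : Function.Periodic f T) (n : ℕ) :
    Function.Periodic (iteratedDeriv n f) T := fun s => by
  rw [← congrFun (iteratedDeriv_comp_add_const n f T) s, hf.funext]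

/-- The affine curvature `ω(x″, x‴)` of a plane curve `x` parametrized by affine arc length. -/
noncomputable def affineCurvature (x : ℝ → ℝ × ℝ) (s : ℝ) : ℝ :=
  om (iteratedDeriv 2 x s) (iteratedDeriv 3 x s)

theorem continuous_affineCurvature {x : ℝ → ℝ × ℝ} (hx : ContDiff ℝ 3 x) :
    Continuous (affineCurvature x) :=
  continuous_om (hx.continuous_iteratedDeriv 2 (by norm_num))
    (hx.continuous_iteratedDeriv 3 le_rfl)

theorem periodic_affineCurvature {x : ℝ → ℝ × ℝ} {T : ℝ} (hx : Function.Periodic x T) :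
    Function.Periodic (affineCurvature x) T := fun s => by
  simp only [affineCurvature, periodic_iteratedDeriv hx _ s]

end AffineCurvature

theorem stmt_16_general {lam : ℝ} (hlam : 0 < lam) {k : ℝ → ℝ} (hk : Continuous k)
    (hper : Function.Periodic k lam) {β₅ β₇ : ℝ}
    (hβ₅ : β₅ = lam ^ 4 / 240 * ∫ t in (0 : ℝ)..lam, k t)
    (hβ₇ : β₇ = 421 * lam ^ 6 / 201600 * (∫ t in (0 : ℝ)..lam, (k t) ^ 2) -
      lam ^ 5 / 600 * (∫ t in (0 : ℝ)..lam, k t) ^ 2) :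
    7 * lam ^ 3 * β₇ ≥ 170 * β₅ ^ 2 ∧
      (7 * lam ^ 3 * β₇ = 170 * β₅ ^ 2 ↔ ∃ c : ℝ, ∀ s : ℝ, k s = c) := by
  have hgap : 7 * lam ^ 3 * β₇ - 170 * β₅ ^ 2 = 421 / 28800 * lam ^ 8 *
      (lam * (∫ t in (0 : ℝ)..lam, k t ^ 2) - (∫ t in (0 : ℝ)..lam, k t) ^ 2) := by
    rw [hβ₅, hβ₇]
    ring
  have hpos : 0 < 421 / 28800 * lam ^ 8 := by positivity
  have hle := sq_intervalIntegral_le hlam.le (memLp_restrict_Ioc_of_continuous hk 2)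
  have heq := sq_intervalIntegral_eq_iff_of_periodic hk hper hlam 0
  rw [sub_zero] at hle
  rw [zero_add] at heq
  constructor
  · exact sub_nonneg.mp (hgap ▸ mul_nonneg hpos.le (sub_nonneg.mpr hle))
  · rw [← heq, ← sub_eq_zero, hgap, mul_eq_zero_iff_left hpos.ne', sub_eq_zero, eq_comm]

theorem stmt_16 (x : ℝ → ℝ × ℝ) (lam : ℝ) (hlam : 0 < lam) (hx : ContDiff ℝ (⊤ : ℕ∞) x)
    (haff : ∀ s : ℝ, om (deriv x s) (iteratedDeriv 2 x s) = 1)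
    (hper : ∀ s : ℝ, x (s + lam) = x s)
    (k : ℝ → ℝ) (hk : ∀ s : ℝ, k s = om (iteratedDeriv 2 x s) (iteratedDeriv 3 x s))
    -- the outer-billiard Mather coefficients
    (β₅ β₇ : ℝ)
    (hβ₅ : β₅ = lam ^ 4 / 240 * ∫ t in (0:ℝ)..lam, k t)
    (hβ₇ : β₇ = 421 * lam ^ 6 / 201600 * (∫ t in (0:ℝ)..lam, (k t) ^ 2) -
      lam ^ 5 / 600 * (∫ t in (0:ℝ)..lam, k t) ^ 2) :
    7 * lam ^ 3 * β₇ ≥ 170 * β₅ ^ 2 ∧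
      (7 * lam ^ 3 * β₇ = 170 * β₅ ^ 2 ↔ ∃ c : ℝ, ∀ s : ℝ, k s = c) := by
  obtain rfl : k = affineCurvature x := funext hk
  exact stmt_16_general hlam (continuous_affineCurvature (contDiff_infty.mp hx 3))
    (periodic_affineCurvature hper) hβ₅ hβ₇
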